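/- If finite simple graphs G and H satisfy G ≅_{S+} H, then G and H have the same number of connected components, and the complements of G and H also have the same number of connected components. -/

import Mathlib

/-!
Write the positive semidefinite isomorphism matrix `M` as the Gram matrix of vectors `v (g, h)`.
The sums `∑ g, v (g, h)` have all their pairwise inner products equal to `1`, so they are one and
the same unit vector. If `h` and `h'` are equal or adjacent, vectors over `h` and `h'` coming from
different components of `G` are orthogonal; hence the partial sums `∑ g' ∈ C, v (g', h)` over a
component `C` of `G` depend only on the component of `h`. The same holds with `G` and `H`
exchanged. For `g ∈ C` and `h ∈ D`, expanding the inner product of `∑ g' ∈ C, v (g', h)` and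
`∑ h' ∈ D, v (g, h')` along either sum gives
`∑ g' ∈ C, M (g', h) (g', h) = ∑ h' ∈ D, M (g, h') (g, h')`.
These numbers form a matrix, indexed by the components of `G` and those of `H`, whose rows and
columns all sum to `1`; such a matrix is square.
-/

open Matrix BigOperators

/-- `rel(g,g') = rel(h,h')`. -/
def relEq {α β : Type*} (G : SimpleGraph α) (H : SimpleGraph β)
    (g g' : α) (h h' : β) : Prop :=
  (g = g' ↔ h = h') ∧ (G.Adj g g' ↔ H.Adj h h')

/-- `M` satisfies the linear constraints of an isomorphism matrix for `G` to `H`. -/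
def IsIsoMatrix {α β : Type*} [Fintype α] [Fintype β]
    (G : SimpleGraph α) (H : SimpleGraph β)
    (M : Matrix (α × β) (α × β) ℝ) : Prop :=
  (∀ g g' : α, ∑ h : β, ∑ h' : β, M (g, h) (g', h') = 1) ∧
  (∀ h h' : β, ∑ g : α, ∑ g' : α, M (g, h) (g', h') = 1) ∧
  (∀ g g' h h', ¬ relEq G H g g' h h' → M (g, h) (g', h') = 0)

section LinearAlgebra

theorem card_eq_card_of_sum_eq_one {ι κ R : Type*} [Fintype ι] [Fintype κ]
    [AddCommMonoidWithOne R] [CharZero R] {f : ι → κ → R}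
    (row_sum : ∀ i, ∑ j, f i j = 1) (col_sum : ∀ j, ∑ i, f i j = 1) :
    Fintype.card ι = Fintype.card κ := by
  have h : ∑ i, ∑ j, f i j = ∑ j, ∑ i, f i j := Finset.sum_comm
  simpa [row_sum, col_sum] using h

open scoped ComplexOrder in
theorem exists_gram_eq_of_posSemidef {n 𝕜 : Type*} [Fintype n] [RCLike 𝕜] {M : Matrix n n 𝕜}
    (hM : M.PosSemidef) : ∃ v : n → EuclideanSpace 𝕜 n, gram 𝕜 v = M := by
  classical
  obtain ⟨B, rfl⟩ : ∃ B : Matrix n n 𝕜, M = Bᴴ * B := by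
    open scoped MatrixOrder in
    exact CStarAlgebra.nonneg_iff_eq_star_mul_self.1 hM.nonneg
  refine ⟨fun j ↦ WithLp.toLp 2 (B.col j), ?_⟩
  ext i j
  simp [gram_apply, PiLp.inner_apply, mul_apply, mul_comm]

end LinearAlgebra

section ComponentSum

variable {α R : Type*} [Fintype α] [AddCommMonoid R] {G : SimpleGraph α}

open Classical in
/-- The sum of `f` over the vertices of the connected component `C`. It is used both for the vectors
of a Gram representation and for the diagonal entries of an isomorphism matrix. -/
noncomputable def componentSum (C : G.ConnectedComponent) (f : α → R) : R :=
  ∑ g with G.connectedComponentMk g = C, f g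

theorem componentSum_congr {C : G.ConnectedComponent} {f f' : α → R}
    (h : ∀ g, G.connectedComponentMk g = C → f g = f' g) :
    componentSum C f = componentSum C f' :=
  Finset.sum_congr rfl fun g hg ↦ h g (by simpa using hg)

theorem componentSum_eq_zero {C : G.ConnectedComponent} {f : α → R}
    (h : ∀ g, G.connectedComponentMk g = C → f g = 0) : componentSum C f = 0 :=
  Finset.sum_eq_zero fun g hg ↦ h g (by simpa using hg)

theorem componentSum_eq_single (g : α) {f : α → R} (h : ∀ g', g' ≠ g → f g' = 0) :
    componentSum (G.connectedComponentMk g) f = f g :=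
  Finset.sum_eq_single_of_mem g (by simp) fun g' _ ↦ h g'

theorem sum_componentSum [Fintype G.ConnectedComponent] (f : α → R) :
    ∑ C : G.ConnectedComponent, componentSum C f = ∑ g, f g := by
  classical
  exact Finset.sum_fiberwise _ G.connectedComponentMk f

variable {𝕜 E : Type*} [RCLike 𝕜] [SeminormedAddCommGroup E] [InnerProductSpace 𝕜 E]

theorem componentSum_inner (C : G.ConnectedComponent) (f : α → E) (x : E) :
    inner 𝕜 (componentSum C f) x = componentSum C fun g ↦ inner 𝕜 (f g) x :=
  sum_inner _ _ _

theorem inner_componentSum (C : G.ConnectedComponent) (f : α → E) (x : E) :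
    inner 𝕜 x (componentSum C f) = componentSum C fun g ↦ inner 𝕜 x (f g) :=
  inner_sum _ _ _

end ComponentSum

section IsoMatrix

variable {α β : Type*} {G : SimpleGraph α} {H : SimpleGraph β}

namespace relEq

variable {g g' : α} {h h' : β}

theorem swap (hr : relEq G H g g' h h') : relEq H G h h' g g' :=
  ⟨hr.1.symm, hr.2.symm⟩

theorem compl (hr : relEq G H g g' h h') : relEq Gᶜ Hᶜ g g' h h' :=
  ⟨hr.1, by simp only [SimpleGraph.compl_adj, ne_eq, hr.1, hr.2]⟩

theorem reachable (hr : relEq G H g g' h h') (hh : h = h' ∨ H.Adj h h') : G.Reachable g g' := by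
  rcases hh with heq | hadj
  · exact hr.1.2 heq ▸ .rfl
  · exact (hr.2.2 hadj).reachable

end relEq

namespace IsIsoMatrix

variable [Fintype α] [Fintype β] {M : Matrix (α × β) (α × β) ℝ}

theorem swap (hM : IsIsoMatrix G H M) : IsIsoMatrix H G (M.submatrix Prod.swap Prod.swap) :=
  ⟨hM.2.1, hM.1, fun h h' g g' hr ↦ hM.2.2 g g' h h' fun hr' ↦ hr hr'.swap⟩

theorem compl (hM : IsIsoMatrix G H M) : IsIsoMatrix Gᶜ Hᶜ M :=
  ⟨hM.1, hM.2.1, fun g g' h h' hr ↦ hM.2.2 g g' h h' fun hr' ↦ hr hr'.compl⟩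

theorem apply_eq_zero_of_ne (hM : IsIsoMatrix G H M) {g g' : α} (hg : g ≠ g') (h : β) :
    M (g, h) (g', h) = 0 :=
  hM.2.2 g g' h h fun hr ↦ hg (hr.1.2 rfl)

theorem sum_diag_eq_one (hM : IsIsoMatrix G H M) (h : β) : ∑ g, M (g, h) (g, h) = 1 := by
  rw [← hM.2.1 h h]
  exact Finset.sum_congr rfl fun g _ ↦
    (Fintype.sum_eq_single g fun g' hg' ↦ hM.apply_eq_zero_of_ne hg'.symm h).symm

section Gram

variable {E : Type*} [NormedAddCommGroup E] [InnerProductSpace ℝ E] {v : α × β → E}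

theorem sum_gram_vector_eq (hv : IsIsoMatrix G H (gram ℝ v)) (h h' : β) :
    ∑ g, v (g, h) = ∑ g, v (g, h') := by
  have inner_eq_one (h h' : β) : inner ℝ (∑ g, v (g, h)) (∑ g, v (g, h')) = 1 := by
    rw [sum_inner]
    simpa only [inner_sum, gram_apply] using hv.2.1 h h'
  have norm_eq_one (h : β) : ‖∑ g, v (g, h)‖ = 1 := by
    rw [norm_eq_sqrt_real_inner, inner_eq_one, Real.sqrt_one]
  exact (inner_eq_one_iff_of_norm_eq_one (norm_eq_one h) (norm_eq_one h')).1 (inner_eq_one h h')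

theorem inner_componentSum_eq_zero (hv : IsIsoMatrix G H (gram ℝ v)) {C C' : G.ConnectedComponent}
    (hC : C ≠ C') {h h' : β} (hh : h = h' ∨ H.Adj h h') :
    inner ℝ (componentSum C fun g ↦ v (g, h)) (componentSum C' fun g ↦ v (g, h')) = 0 := by
  rw [componentSum_inner]
  refine componentSum_eq_zero fun g hg ↦ ?_
  rw [inner_componentSum]
  refine componentSum_eq_zero fun g' hg' ↦ hv.2.2 g g' h h' fun hr ↦ hC ?_
  rw [← hg, ← hg']
  exact SimpleGraph.ConnectedComponent.sound (hr.reachable hh)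

theorem inner_componentSum_sum (hv : IsIsoMatrix G H (gram ℝ v)) (C : G.ConnectedComponent)
    {h h' : β} (hh : h = h' ∨ H.Adj h h') :
    inner ℝ (componentSum C fun g ↦ v (g, h)) (∑ g, v (g, h')) =
      inner ℝ (componentSum C fun g ↦ v (g, h)) (componentSum C fun g ↦ v (g, h')) := by
  classical
  rw [← sum_componentSum (G := G), inner_sum]
  exact Fintype.sum_eq_single C fun C' hC' ↦ hv.inner_componentSum_eq_zero hC'.symm hh

theorem componentSum_eq_of_adj (hv : IsIsoMatrix G H (gram ℝ v)) (C : G.ConnectedComponent)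
    {h h' : β} (hh : H.Adj h h') :
    (componentSum C fun g ↦ v (g, h)) = componentSum C fun g ↦ v (g, h') := by
  have inner_eq_norm_sq {h h' : β} (hh : H.Adj h h') :
      inner ℝ (componentSum C fun g ↦ v (g, h)) (componentSum C fun g ↦ v (g, h')) =
        ‖componentSum C fun g ↦ v (g, h)‖ ^ 2 := by
    rw [← hv.inner_componentSum_sum C (.inr hh), hv.sum_gram_vector_eq h' h,
      hv.inner_componentSum_sum C (.inl rfl), real_inner_self_eq_norm_sq]
  rw [← sub_eq_zero, ← norm_eq_zero, ← sq_eq_zero_iff, norm_sub_sq_real]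
  linarith [inner_eq_norm_sq hh, inner_eq_norm_sq hh.symm, real_inner_comm
    (componentSum C fun g ↦ v (g, h)) (componentSum C fun g ↦ v (g, h'))]

theorem componentSum_eq_of_reachable (hv : IsIsoMatrix G H (gram ℝ v)) (C : G.ConnectedComponent)
    {h h' : β} (hh : H.Reachable h h') :
    (componentSum C fun g ↦ v (g, h)) = componentSum C fun g ↦ v (g, h') := by
  obtain ⟨p⟩ := hh
  induction p with
  | nil => rfl
  | cons hadj _ ih => exact (hv.componentSum_eq_of_adj C hadj).trans ih

theorem inner_componentSum_of_reachable (hv : IsIsoMatrix G H (gram ℝ v)) (g : α) {h h' : β}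
    (hh : H.Reachable h h') :
    inner ℝ (componentSum (G.connectedComponentMk g) fun g' ↦ v (g', h)) (v (g, h')) =
      gram ℝ v (g, h') (g, h') := by
  rw [hv.componentSum_eq_of_reachable _ hh, componentSum_inner]
  exact componentSum_eq_single g fun g' hg' ↦ hv.apply_eq_zero_of_ne hg' h'

theorem componentSum_gram_diag_eq_inner (hv : IsIsoMatrix G H (gram ℝ v)) (g : α) (h : β) :
    (componentSum (H.connectedComponentMk h) fun h' ↦ gram ℝ v (g, h') (g, h')) =
      inner ℝ (componentSum (G.connectedComponentMk g) fun g' ↦ v (g', h))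
        (componentSum (H.connectedComponentMk h) fun h' ↦ v (g, h')) := by
  rw [inner_componentSum]
  exact componentSum_congr fun h' hh' ↦ (hv.inner_componentSum_of_reachable g
    (SimpleGraph.ConnectedComponent.exact hh'.symm)).symm

end Gram

theorem componentSum_diag_eq (hM : IsIsoMatrix G H M) (hpos : M.PosSemidef) (g : α) (h : β) :
    (componentSum (G.connectedComponentMk g) fun g' ↦ M (g', h) (g', h)) =
      componentSum (H.connectedComponentMk h) fun h' ↦ M (g, h') (g, h') := by
  obtain ⟨v, rfl⟩ := exists_gram_eq_of_posSemidef hpos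
  have hv_swap : IsIsoMatrix H G (gram ℝ (v ∘ Prod.swap)) := hM.swap
  exact (hv_swap.componentSum_gram_diag_eq_inner h g).trans <|
    (real_inner_comm _ _).trans (hM.componentSum_gram_diag_eq_inner g h).symm

theorem card_connectedComponent_eq (hM : IsIsoMatrix G H M) (hpos : M.PosSemidef) :
    Nat.card G.ConnectedComponent = Nat.card H.ConnectedComponent := by
  classical
  choose g hg using fun C : G.ConnectedComponent ↦ C.exists_rep
  choose h hh using fun D : H.ConnectedComponent ↦ D.exists_rep
  have componentSum_diag_rep (C : G.ConnectedComponent) (D : H.ConnectedComponent) :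
      (componentSum C fun g' ↦ M (g', h D) (g', h D)) =
        componentSum D fun h' ↦ M (g C, h') (g C, h') := by
    simpa only [SimpleGraph.connectedComponentMk, hg, hh] using
      hM.componentSum_diag_eq hpos (g C) (h D)
  rw [Nat.card_eq_fintype_card, Nat.card_eq_fintype_card]
  refine card_eq_card_of_sum_eq_one
    (f := fun C D ↦ componentSum C fun g' ↦ M (g', h D) (g', h D)) (fun C ↦ ?_) fun D ↦ ?_
  · simp only [componentSum_diag_rep]
    exact (sum_componentSum _).trans (hM.swap.sum_diag_eq_one (g C))
  · exact (sum_componentSum _).trans (hM.sum_diag_eq_one (h D))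

end IsIsoMatrix

end IsoMatrix

/-- If `G ≅_{S+} H`, then `G` and `H` have the same number of connected components,
as do their complements. -/
theorem connectedComponents_of_sPlus_iso {α β : Type*}
    [Fintype α] [Fintype β]
    (G : SimpleGraph α) (H : SimpleGraph β)
    (h : ∃ M, IsIsoMatrix G H M ∧ M.PosSemidef) :
    Nat.card G.ConnectedComponent = Nat.card H.ConnectedComponent ∧
    Nat.card Gᶜ.ConnectedComponent = Nat.card Hᶜ.ConnectedComponent := by
  obtain ⟨M, hM, hpos⟩ := h
  exact ⟨hM.card_connectedComponent_eq hpos, hM.compl.card_connectedComponent_eq hpos⟩
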